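/- Let m ≥ 1 be an integer and define S(t,r) = (1/|t|)·Q(r/|t|)·e^{i·r²/(4t)} for t < 0, r > 0. Then S satisfies the CSS equation at every point of (−∞,0)×(0,∞); moreover ‖S(t,·)‖_{L²}² = 8π(m+1) for every t < 0, and ‖∂_r S(t,·)‖_{L²} → ∞ as t ↗ 0, so S is an explicit finite-time blowup solution. -/

import Mathlib

open MeasureTheory Set Filter

noncomputable section

/-- The Jackiw–Pi vortex `Q(r) = √8 (m+1) r^m / (1 + r^(2m+2))`. -/
def Q (m : ℕ) (r : ℝ) : ℝ :=
  Real.sqrt 8 * (m + 1) * r ^ m / (1 + r ^ (2 * m + 2))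

/-- `A_θ[u](r) = -(1/2) ∫₀^r |u(r')|² r' dr'`. -/
def Atheta (u : ℝ → ℂ) (r : ℝ) : ℝ :=
  -(1 / 2) * ∫ s in (0:ℝ)..r, ‖u s‖ ^ 2 * s

/-- Bilinear version `A_θ[f,g](r) = -(1/2) ∫₀^r Re(conj f g) r' dr'`. -/
def Atheta2 (f g : ℝ → ℂ) (r : ℝ) : ℝ :=
  -(1 / 2) * ∫ s in (0:ℝ)..r, ((starRingEnd ℂ) (f s) * g s).re * s

/-- `A_t[u](r) = -∫_r^∞ (m + A_θ[u](r')) |u(r')|² / r' dr'`. -/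
def At (m : ℕ) (u : ℝ → ℂ) (r : ℝ) : ℝ :=
  -∫ s in Set.Ioi r, ((m : ℝ) + Atheta u s) * ‖u s‖ ^ 2 / s

/-- Squared (2D radial) `L²` norm: `‖u‖² = 2π ∫₀^∞ |u(r)|² r dr`. -/
def L2sq (u : ℝ → ℂ) : ℝ :=
  2 * Real.pi * ∫ r in Set.Ioi (0:ℝ), ‖u r‖ ^ 2 * r

/-- Squared equivariant `Ḣ¹_m` norm. -/
def H1msq (m : ℕ) (u : ℝ → ℂ) : ℝ :=
  2 * Real.pi * ∫ r in Set.Ioi (0:ℝ), (‖deriv u r‖ ^ 2 + (m : ℝ) ^ 2 * ‖u r‖ ^ 2 / r ^ 2) * r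

/-- The energy functional. -/
def Energy (m : ℕ) (u : ℝ → ℂ) : ℝ :=
  2 * Real.pi * ∫ r in Set.Ioi (0:ℝ),
    ((1 / 2) * ‖deriv u r‖ ^ 2
      + (1 / 2) * (((m : ℝ) + Atheta u r) / r) ^ 2 * ‖u r‖ ^ 2
      - (1 / 4) * ‖u r‖ ^ 4) * r

/-- The Chern–Simons–Schrödinger equation at the point `(t, r)`:
`i ∂_t u - A_t[u] u + ∂_r² u + (1/r) ∂_r u - ((m + A_θ[u])/r)² u + |u|² u = 0`. -/
def CSSeq (m : ℕ) (u : ℝ → ℝ → ℂ) (t r : ℝ) : Prop :=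
  Complex.I * deriv (fun s => u s r) t
    - (At m (u t) r : ℂ) * u t r
    + deriv (deriv (u t)) r
    + (1 / (r : ℂ)) * deriv (u t) r
    - ((((m : ℝ) + Atheta (u t) r) / r : ℝ) : ℂ) ^ 2 * u t r
    + ((‖u t r‖ : ℝ) : ℂ) ^ 2 * u t r = 0

/-- A classical `m`-equivariant solution of CSS on the open interval `I`. -/
structure IsCSS (m : ℕ) (I : Set ℝ) (u : ℝ → ℝ → ℂ) : Prop where
  smooth : ContDiffOn ℝ (⊤ : ℕ∞) (fun p : ℝ × ℝ => u p.1 p.2) (I ×ˢ Set.Ioi (0:ℝ))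
  integrable : ∀ t ∈ I, IntegrableOn (fun r => ‖u t r‖ ^ 2 * r) (Set.Ioi (0:ℝ))
  equivariant : ∃ U : ℝ → ℝ × ℝ → ℂ,
    ContDiffOn ℝ (⊤ : ℕ∞) (fun p : ℝ × (ℝ × ℝ) => U p.1 p.2) (I ×ˢ (Set.univ : Set (ℝ × ℝ))) ∧
    ∀ t ∈ I, ∀ x : ℝ × ℝ, x ≠ 0 →
      U t x = u t (Real.sqrt (x.1 ^ 2 + x.2 ^ 2)) *
        (((x.1 : ℂ) + (x.2 : ℂ) * Complex.I) / ((Real.sqrt (x.1 ^ 2 + x.2 ^ 2) : ℝ) : ℂ)) ^ m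
  bounded : ∀ J : Set ℝ, J ⊆ I → IsCompact J → ∃ C : ℝ, ∀ t ∈ J,
    Real.sqrt (L2sq (u t)) + Real.sqrt (H1msq m (u t)) ≤ C
  eq : ∀ t ∈ I, ∀ r : ℝ, 0 < r → CSSeq m u t r

/-- Tightness: uniformly small mass near spatial infinity. -/
def Tight (I : Set ℝ) (u : ℝ → ℝ → ℂ) : Prop :=
  ∀ η : ℝ, 0 < η → ∃ R : ℝ, ∀ t ∈ I,
    2 * Real.pi * ∫ r in Set.Ioi R, ‖u t r‖ ^ 2 * r < η

/-- The real inner product `(f,g)_r = Re (2π ∫₀^∞ f conj(g) r dr)`. -/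
def iprod (f g : ℝ → ℂ) : ℝ :=
  2 * Real.pi * (∫ r in Set.Ioi (0:ℝ), f r * (starRingEnd ℂ) (g r) * (r : ℂ)).re

/-- `ΛQ = r Q' + Q`. -/
def LamQ (m : ℕ) (r : ℝ) : ℝ := r * deriv (Q m) r + Q m r

/-- The linearized Bogomol'nyi operator `L_Q`. -/
def LQ (m : ℕ) (f : ℝ → ℂ) (r : ℝ) : ℂ :=
  deriv f r - ((((m : ℝ) + Atheta (fun s => (Q m s : ℂ)) r) / r : ℝ) : ℂ) * f r
    - ((2 * Atheta2 (fun s => (Q m s : ℂ)) f r / r : ℝ) : ℂ) * (Q m r : ℂ)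

end

lemma den_pos (m : ℕ) (p : ℝ) : 0 < 1 + p ^ (2 * m + 2) := by
  have : 0 ≤ p ^ (2 * m + 2) := Even.pow_nonneg ⟨m + 1, by ring⟩ p
  linarith

/-- (m + A_θ[Q])/r -/
noncomputable def aa (m : ℕ) (p : ℝ) : ℝ :=
  (m - (m + 2) * p ^ (2 * m + 2)) / ((1 + p ^ (2 * m + 2)) * p)

lemma sqrt8 : Real.sqrt 8 ^ 2 = 8 := Real.sq_sqrt (by norm_num)

lemma Q_sq (m : ℕ) (p : ℝ) :
    Q m p ^ 2 = 8 * (m + 1) ^ 2 * p ^ (2 * m) / (1 + p ^ (2 * m + 2)) ^ 2 := by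
  unfold Q
  rw [div_pow, mul_pow, mul_pow, sqrt8, ← pow_mul, mul_comm m 2]

lemma hasDerivAt_pow' (k : ℕ) (p : ℝ) (hp : 0 < p) :
    HasDerivAt (fun x : ℝ => x ^ k) (k * p ^ k / p) p := by
  have h := hasDerivAt_pow k p
  refine h.congr_deriv ?_
  cases k with
  | zero => simp
  | succ n => rw [pow_succ]; field_simp; simp

lemma hasDerivAt_Q (m : ℕ) (p : ℝ) (hp : 0 < p) : HasDerivAt (Q m) (aa m p * Q m p) p := by
  have hd := den_pos m p
  have h1 := (hasDerivAt_pow' m p hp).const_mul (Real.sqrt 8 * (m + 1))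
  have h2 := (hasDerivAt_pow' (2 * m + 2) p hp).const_add 1
  have h := h1.fun_div h2 hd.ne'
  refine h.congr_deriv ?_
  unfold aa Q
  push_cast
  generalize p ^ (2 * m + 2) = w at *
  generalize p ^ m = v at *
  field_simp
  ring

lemma hasDerivAt_aa (m : ℕ) (p : ℝ) (hp : 0 < p) :
    HasDerivAt (aa m) (- Q m p ^ 2 / 2 - aa m p / p) p := by
  have hd := den_pos m p
  have h2 := hasDerivAt_pow' (2 * m + 2) p hp
  have h := ((h2.const_mul ((m : ℝ) + 2)).const_sub (m : ℝ)).fun_div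
    ((h2.const_add 1).fun_mul (hasDerivAt_id p)) (mul_pos hd hp).ne'
  refine h.congr_deriv ?_
  rw [Q_sq]
  unfold aa
  push_cast
  have e : p ^ (2 * m + 2) = p ^ (2 * m) * p ^ 2 := pow_add _ _ _
  rw [e] at hd ⊢
  simp only [id]
  generalize p ^ (2 * m) = w at *
  field_simp
  ring

lemma int_k (m k : ℕ) (hk : k + 2 ≤ 4 * m + 4) :
    IntegrableOn (fun p : ℝ => p ^ k / (1 + p ^ (2 * m + 2)) ^ 2) (Ioi 0) := by
  have hc : Continuous (fun p : ℝ => p ^ k / (1 + p ^ (2 * m + 2)) ^ 2) := by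
    refine Continuous.div (by fun_prop) (by fun_prop) fun p => ?_
    have := den_pos m p
    positivity
  refine Integrable.mono' ((integrable_inv_one_add_sq.const_mul 2).integrableOn)
    hc.aestronglyMeasurable.restrict ?_
  refine (ae_restrict_iff' measurableSet_Ioi).2 (Eventually.of_forall fun p hp => ?_)
  have hp : 0 < p := hp
  have hd := den_pos m p
  have key : ∀ j ≤ 4 * m + 4, p ^ j ≤ (1 + p ^ (2 * m + 2)) ^ 2 := by
    intro j hj
    have e : (1 + p ^ (2 * m + 2)) ^ 2 = 1 + 2 * p ^ (2 * m + 2) + p ^ (4 * m + 4) := by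
      rw [show 4 * m + 4 = (2 * m + 2) * 2 by ring, pow_mul]; ring
    have h1 : 0 < p ^ (2 * m + 2) := by positivity
    have h2 : 0 < p ^ (4 * m + 4) := by positivity
    rw [e]
    rcases le_total p 1 with h | h
    · have := pow_le_one₀ (n := j) hp.le h
      linarith
    · have := pow_le_pow_right₀ h hj
      linarith
  rw [Real.norm_of_nonneg (by positivity), ← div_eq_mul_inv, div_le_div_iff₀ (by positivity) (by positivity)]
  have h1 := key k (by omega)
  have h2 := key (k + 2) hk
  calc p ^ k * (1 + p ^ 2) = p ^ k + p ^ (k + 2) := by ring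
    _ ≤ _ := by linarith

lemma hasDerivAt_prim (m : ℕ) (p : ℝ) :
    HasDerivAt (fun x : ℝ => -4 * (m + 1) / (1 + x ^ (2 * m + 2))) (Q m p ^ 2 * p) p := by
  have hd := den_pos m p
  have h2 := (hasDerivAt_pow (2 * m + 2) p).const_add 1
  have h := (hasDerivAt_const p ((-4 : ℝ) * (m + 1))).fun_div h2 hd.ne'
  refine h.congr_deriv ?_
  rw [Q_sq]
  push_cast
  rw [pow_succ p (2 * m)]
  generalize p ^ (2 * m + 2) = w at *
  field_simp
  ring

lemma Q_cont (m : ℕ) : Continuous (Q m) := by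
  unfold Q
  exact Continuous.div (by fun_prop) (by fun_prop) fun p => (den_pos m p).ne'

lemma int_Q0 (m : ℕ) (r : ℝ) :
    ∫ s in (0:ℝ)..r, Q m s ^ 2 * s = 4 * (m + 1) - 4 * (m + 1) / (1 + r ^ (2 * m + 2)) := by
  rw [intervalIntegral.integral_eq_sub_of_hasDerivAt (fun x _ => hasDerivAt_prim m x)]
  · simp; ring
  · have := Q_cont m
    exact Continuous.intervalIntegrable (by fun_prop) _ _

lemma int_Qtop (m : ℕ) : ∫ s in Ioi (0:ℝ), Q m s ^ 2 * s = 4 * (m + 1) := by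
  have hint : IntegrableOn (fun s => Q m s ^ 2 * s) (Ioi 0) := by
    have := (int_k m (2 * m + 1) (by omega)).const_mul (8 * ((m : ℝ) + 1) ^ 2)
    refine this.congr (Eventually.of_forall fun s => ?_)
    simp only [Q_sq, pow_succ s (2*m)]; ring
  have ht : Tendsto (fun x : ℝ => -4 * ((m : ℝ) + 1) / (1 + x ^ (2 * m + 2))) atTop (nhds 0) :=
    Tendsto.div_atTop tendsto_const_nhds
      (tendsto_atTop_add_const_left _ _ (tendsto_pow_atTop (by omega)))
  rw [integral_Ioi_of_hasDerivAt_of_tendsto' (fun x _ => hasDerivAt_prim m x) hint ht]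
  simp

lemma aa_bound (m : ℕ) (p : ℝ) (hp : 0 < p) : |aa m p| ≤ (m + 2) / p := by
  have hd := den_pos m p
  have hw : 0 < p ^ (2 * m + 2) := by positivity
  unfold aa
  rw [abs_div, abs_of_pos (mul_pos hd hp), div_le_div_iff₀ (by positivity) hp]
  have : |(m : ℝ) - (m + 2) * p ^ (2 * m + 2)| ≤ (m + 2) * (1 + p ^ (2 * m + 2)) := by
    have : (0:ℝ) ≤ m := by positivity
    rw [abs_le]; constructor <;> nlinarith
  nlinarith [mul_le_mul_of_nonneg_right this hp.le]

lemma aa_meas (m : ℕ) : Measurable (aa m) := by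
  unfold aa; fun_prop

lemma int_Qp (m : ℕ) (hm : 1 ≤ m) : IntegrableOn (fun p => Q m p ^ 2 / p) (Ioi 0) := by
  have := (int_k m (2 * m - 1) (by omega)).const_mul (8 * ((m : ℝ) + 1) ^ 2)
  refine this.congr ((ae_restrict_iff' measurableSet_Ioi).2 (Eventually.of_forall fun s hs => ?_))
  have hs : 0 < s := hs
  obtain ⟨n, rfl⟩ := Nat.exists_eq_add_of_le' hm
  have hd := den_pos (n+1) s
  simp only [Q_sq]
  rw [show 2 * (n + 1) - 1 = 2 * n + 1 by omega, show s ^ (2 * (n+1)) = s ^ (2 * n + 1) * s by ring]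
  field_simp

lemma int_G (m : ℕ) (hm : 1 ≤ m) : IntegrableOn (fun p => (aa m p * Q m p) ^ 2 * p) (Ioi 0) := by
  have hq := (Q_cont m).measurable
  have ha := aa_meas m
  refine Integrable.mono' ((int_Qp m hm).const_mul ((m + 2) ^ 2)) (by fun_prop) ?_
  refine (ae_restrict_iff' measurableSet_Ioi).2 (Eventually.of_forall fun p hp => ?_)
  have hp : 0 < p := hp
  have h := aa_bound m p hp
  have h2 : aa m p ^ 2 ≤ ((m + 2) / p) ^ 2 := by
    rw [← sq_abs]; gcongr
  rw [Real.norm_of_nonneg (by positivity), mul_pow]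
  calc aa m p ^ 2 * Q m p ^ 2 * p ≤ ((m + 2) / p) ^ 2 * Q m p ^ 2 * p := by gcongr
    _ = _ := by field_simp

lemma int_H (m : ℕ) (hm : 1 ≤ m) : IntegrableOn (fun p => Q m p ^ 2 * p ^ 3) (Ioi 0) := by
  have := (int_k m (2 * m + 3) (by omega)).const_mul (8 * ((m : ℝ) + 1) ^ 2)
  refine this.congr (Eventually.of_forall fun s => ?_)
  simp only [Q_sq, pow_add s (2*m)]; ring

lemma Q_top (m : ℕ) : Tendsto (fun p => Q m p ^ 2 / 2) atTop (nhds 0) := by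
  have hb : Tendsto (fun p : ℝ => 4 * ((m : ℝ) + 1) ^ 2 / p) atTop (nhds 0) :=
    Tendsto.div_atTop tendsto_const_nhds tendsto_id
  refine squeeze_zero' (Eventually.of_forall fun p => by positivity) ?_ hb
  filter_upwards [eventually_ge_atTop 1] with p hp
  have hd := den_pos m p
  have h1 : p ^ (2 * m) * p ≤ (1 + p ^ (2 * m + 2)) ^ 2 := by
    have h2 : p ^ (2 * m) * p ≤ p ^ (2 * m + 2) := by
      rw [← pow_succ]; exact pow_le_pow_right₀ hp (by omega)
    nlinarith
  rw [Q_sq, div_div, div_le_div_iff₀ (by positivity) (by positivity)]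
  nlinarith [mul_le_mul_of_nonneg_left h1 (show (0:ℝ) ≤ 8 * (m + 1) ^ 2 by positivity)]

lemma int_At (m : ℕ) (hm : 1 ≤ m) (r : ℝ) (hr : 0 < r) :
    ∫ s in Ioi r, aa m s * Q m s ^ 2 = - (Q m r ^ 2 / 2) := by
  have hq := (Q_cont m).measurable
  have ha := aa_meas m
  have hint : IntegrableOn (fun s => aa m s * Q m s ^ 2) (Ioi r) := by
    refine IntegrableOn.mono_set ?_ (Ioi_subset_Ioi hr.le)
    refine Integrable.mono' ((int_Qp m hm).const_mul (m + 2)) (by fun_prop) ?_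
    refine (ae_restrict_iff' measurableSet_Ioi).2 (Eventually.of_forall fun p hp => ?_)
    have hp : 0 < p := hp
    rw [norm_mul, Real.norm_of_nonneg (sq_nonneg (Q m p)), Real.norm_eq_abs]
    calc |aa m p| * Q m p ^ 2 ≤ (m + 2) / p * Q m p ^ 2 := by gcongr; exact aa_bound m p hp
      _ = _ := by ring
  rw [integral_Ioi_of_hasDerivAt_of_tendsto' (f := fun p => Q m p ^ 2 / 2) (m := 0) ?_ hint (Q_top m)]
  · simp
  · intro x hx
    have hx : 0 < x := hr.trans_le hx
    refine (((hasDerivAt_Q m x hx).fun_pow 2).div_const 2).congr_deriv ?_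
    push_cast; ring

/-! scaled quantities, `u = μ Q(μ r)` in modulus -/

lemma Atheta_eq (m : ℕ) (μ : ℝ) (hμ : 0 < μ) (u : ℝ → ℂ) (hu : ∀ r, ‖u r‖ ^ 2 = μ ^ 2 * Q m (μ * r) ^ 2)
    (r : ℝ) (hr : 0 < r) : (m : ℝ) + Atheta u r = r * μ * aa m (μ * r) := by
  have hd := den_pos m (μ * r)
  have e : ∫ s in (0:ℝ)..r, ‖u s‖ ^ 2 * s = ∫ s in (0:ℝ)..(μ * r), Q m s ^ 2 * s := by
    have h := intervalIntegral.integral_comp_mul_left (a := 0) (b := r)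
      (fun s => Q m s ^ 2 * s) hμ.ne'
    rw [mul_zero, eq_inv_smul_iff₀ hμ.ne', smul_eq_mul, ← intervalIntegral.integral_const_mul] at h
    rw [← h]
    congr 1; ext s; rw [hu]; ring
  rw [Atheta, e, int_Q0, aa]
  generalize (μ * r) ^ (2 * m + 2) = w at *
  field_simp
  ring

lemma At_eq (m : ℕ) (hm : 1 ≤ m) (μ : ℝ) (hμ : 0 < μ) (u : ℝ → ℂ)
    (hu : ∀ r, ‖u r‖ ^ 2 = μ ^ 2 * Q m (μ * r) ^ 2)
    (r : ℝ) (hr : 0 < r) : At m u r = μ ^ 2 * Q m (μ * r) ^ 2 / 2 := by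
  have e : ∫ s in Ioi r, ((m : ℝ) + Atheta u s) * ‖u s‖ ^ 2 / s
      = ∫ s in Ioi r, μ ^ 3 * (fun x => aa m x * Q m x ^ 2) (μ * s) := by
    refine setIntegral_congr_fun measurableSet_Ioi fun s hs => ?_
    have hs : 0 < s := hr.trans hs
    simp only
    rw [Atheta_eq m μ hμ u hu s hs, hu]
    field_simp
  rw [At, e, integral_const_mul, integral_comp_mul_left_Ioi (fun x => aa m x * Q m x ^ 2) _ hμ, int_At m hm _ (by positivity)]
  simp only [smul_eq_mul]
  field_simp

lemma L2_eq (m : ℕ) (μ : ℝ) (hμ : 0 < μ) (u : ℝ → ℂ)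
    (hu : ∀ r, ‖u r‖ ^ 2 = μ ^ 2 * Q m (μ * r) ^ 2) : L2sq u = 8 * Real.pi * (m + 1) := by
  have e : ∫ s in Ioi (0:ℝ), ‖u s‖ ^ 2 * s
      = ∫ s in Ioi (0:ℝ), μ * (fun x => Q m x ^ 2 * x) (μ * s) := by
    congr 1; ext s; rw [hu]; ring
  rw [L2sq, e, integral_const_mul, integral_comp_mul_left_Ioi (fun x => Q m x ^ 2 * x) _ hμ, mul_zero, int_Qtop]
  simp only [smul_eq_mul]
  field_simp
  ring

lemma G_pos (m : ℕ) (hm : 1 ≤ m) : 0 < ∫ p in Ioi (0:ℝ), (aa m p * Q m p) ^ 2 * p := by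
  rw [setIntegral_pos_iff_support_of_nonneg_ae _ (int_G m hm)]
  · refine lt_of_lt_of_le ?_ (measure_mono (s := Ioo (0:ℝ) (1/2)) ?_)
    · simp
    · rintro p ⟨h0, h1⟩
      refine ⟨?_, h0⟩
      have hd := den_pos m p
      have hw : p ^ (2 * m + 2) < 1 / 4 := by
        calc p ^ (2 * m + 2) ≤ p ^ 2 := pow_le_pow_of_le_one h0.le (by linarith) (by omega)
          _ < 1 / 4 := by nlinarith
      have hm' : (1:ℝ) ≤ m := by exact_mod_cast hm
      have hn : 0 < (m:ℝ) - (m + 2) * p ^ (2 * m + 2) := by nlinarith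
      have ha : 0 < aa m p := by unfold aa; positivity
      have hQ : 0 < Q m p := by unfold Q; positivity
      exact (by positivity : 0 < (aa m p * Q m p) ^ 2 * p).ne'
  · refine (ae_restrict_iff' measurableSet_Ioi).2 (Eventually.of_forall fun p hp => ?_)
    have hp : 0 < p := hp
    simp only [Pi.zero_apply]
    positivity

/-- the profile -/
noncomputable def SS (m : ℕ) (t r : ℝ) : ℂ :=
  ((-t⁻¹ : ℝ) : ℂ) * (Q m (-t⁻¹ * r) : ℂ) * Complex.exp (Complex.I * (r : ℂ) ^ 2 / (4 * (t : ℂ)))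

lemma SS_norm (m : ℕ) (t r : ℝ) : ‖SS m t r‖ ^ 2 = (-t⁻¹) ^ 2 * Q m (-t⁻¹ * r) ^ 2 := by
  have : Complex.I * (r : ℂ) ^ 2 / (4 * (t : ℂ)) = ((r ^ 2 / (4 * t) : ℝ) : ℂ) * Complex.I := by
    push_cast; ring
  rw [SS, norm_mul, norm_mul, this, Complex.norm_exp_ofReal_mul_I, Complex.norm_real,
    Complex.norm_real, mul_one, mul_pow, Real.norm_eq_abs, Real.norm_eq_abs, sq_abs, sq_abs]

lemma exp_r (t r : ℝ) : HasDerivAt (fun r : ℝ => Complex.exp (Complex.I * (r : ℂ) ^ 2 / (4 * (t : ℂ))))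
    (Complex.exp (Complex.I * (r : ℂ) ^ 2 / (4 * (t : ℂ))) * (Complex.I * r / (2 * t))) r := by
  have h := ((((hasDerivAt_id r).ofReal_comp.fun_pow 2).const_mul Complex.I).div_const (4 * (t:ℂ))).cexp
  refine h.congr_deriv ?_
  simp only [id]
  push_cast
  ring

lemma exp_t (t r : ℝ) (ht : t ≠ 0) :
    HasDerivAt (fun t : ℝ => Complex.exp (Complex.I * (r : ℂ) ^ 2 / (4 * (t : ℂ))))
    (Complex.exp (Complex.I * (r : ℂ) ^ 2 / (4 * (t : ℂ))) * (-Complex.I * r ^ 2 / (4 * t ^ 2))) t := by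
  have ht' : (t : ℂ) ≠ 0 := by exact_mod_cast ht
  have h := ((hasDerivAt_const t (Complex.I * (r:ℂ) ^ 2)).fun_div
    (((hasDerivAt_id t).ofReal_comp).const_mul (4 : ℂ)) (by simpa using ht')).cexp
  refine h.congr_deriv ?_
  simp only [id]
  push_cast
  field_simp
  ring

lemma SS_r (m : ℕ) (t r : ℝ) (ht : t < 0) (hr : 0 < r) :
    HasDerivAt (SS m t) ((((-t⁻¹) * aa m (-t⁻¹ * r) : ℝ) + Complex.I * r / (2 * t)) * SS m t r) r := by
  have hμ : 0 < -t⁻¹ := by simpa using ht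
  have hq := ((hasDerivAt_Q m (-t⁻¹ * r) (by positivity)).comp r
    ((hasDerivAt_id r).const_mul (-t⁻¹))).ofReal_comp
  have h := (hq.const_mul ((-t⁻¹ : ℝ) : ℂ)).fun_mul (exp_r t r)
  refine h.congr_deriv ?_
  unfold SS
  simp only [id, Function.comp]
  push_cast
  ring

lemma SS_rr (m : ℕ) (t r : ℝ) (ht : t < 0) (hr : 0 < r) :
    HasDerivAt (deriv (SS m t))
      ((((-t⁻¹) ^ 2 * (- Q m (-t⁻¹ * r) ^ 2 / 2 - aa m (-t⁻¹ * r) / (-t⁻¹ * r)) : ℝ)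
          + Complex.I / (2 * t)) * SS m t r
        + (((-t⁻¹) * aa m (-t⁻¹ * r) : ℝ) + Complex.I * r / (2 * t)) ^ 2 * SS m t r) r := by
  have hμ : 0 < -t⁻¹ := by simpa using ht
  have ha := (((hasDerivAt_aa m (-t⁻¹ * r) (by positivity)).comp r
    ((hasDerivAt_id r).const_mul (-t⁻¹))).const_mul (-t⁻¹)).ofReal_comp
  have hb := (((hasDerivAt_id r).ofReal_comp).const_mul Complex.I).div_const (2 * (t:ℂ))
  have h := (ha.fun_add hb).fun_mul (SS_r m t r ht hr)
  have h' := h.congr_of_eventuallyEq (f₁ := deriv (SS m t)) (by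
    filter_upwards [lt_mem_nhds hr] with x hx
    rw [(SS_r m t x ht hx).deriv]; rfl)
  refine h'.congr_deriv ?_
  simp only [id, Function.comp]
  push_cast
  ring

lemma SS_t (m : ℕ) (t r : ℝ) (ht : t < 0) (hr : 0 < r) :
    HasDerivAt (fun t => SS m t r)
      ((-(t:ℂ)⁻¹ + (r / t ^ 2 * aa m (-t⁻¹ * r) : ℝ) - Complex.I * r ^ 2 / (4 * t ^ 2)) * SS m t r) t := by
  have hμ : 0 < -t⁻¹ := by simpa using ht
  have ht' : (t : ℂ) ≠ 0 := by exact_mod_cast ht.ne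
  have hi := (hasDerivAt_inv ht.ne).fun_neg
  have hq := ((hasDerivAt_Q m (-t⁻¹ * r) (by positivity)).comp t (hi.mul_const r)).ofReal_comp
  have h := (hi.ofReal_comp.fun_mul hq).fun_mul (exp_t t r ht.ne)
  refine h.congr_deriv ?_
  unfold SS
  simp only [Function.comp]
  push_cast
  field_simp
  ring

lemma SS_css (m : ℕ) (hm : 1 ≤ m) (t r : ℝ) (ht : t < 0) (hr : 0 < r) : CSSeq m (SS m) t r := by
  have hμ : 0 < -t⁻¹ := by simpa using ht
  have ht' : (t : ℂ) ≠ 0 := by exact_mod_cast ht.ne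
  have hr' : (r : ℂ) ≠ 0 := by exact_mod_cast hr.ne'
  unfold CSSeq
  rw [At_eq m hm _ hμ _ (SS_norm m t) r hr, Atheta_eq m _ hμ _ (SS_norm m t) r hr,
    (SS_rr m t r ht hr).deriv, (SS_r m t r ht hr).deriv, (SS_t m t r ht hr).deriv,
    ← Complex.ofReal_pow ‖SS m t r‖, SS_norm]
  generalize aa m (-t⁻¹ * r) = a
  generalize Q m (-t⁻¹ * r) = q
  generalize SS m t r = s
  push_cast
  field_simp
  ring

lemma SS_H1 (m : ℕ) (hm : 1 ≤ m) (t : ℝ) (ht : t < 0) :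
    ∫ r in Ioi (0:ℝ), ‖deriv (SS m t) r‖ ^ 2 * r =
      (t ^ 2)⁻¹ * (∫ p in Ioi (0:ℝ), (aa m p * Q m p) ^ 2 * p)
        + 1 / 4 * ∫ p in Ioi (0:ℝ), Q m p ^ 2 * p ^ 3 := by
  have hμ : 0 < -t⁻¹ := by simpa using ht
  have e : ∫ r in Ioi (0:ℝ), ‖deriv (SS m t) r‖ ^ 2 * r =
     ∫ r in Ioi (0:ℝ), (-t⁻¹) * (fun p => (t ^ 2)⁻¹ * ((aa m p * Q m p) ^ 2 * p)
        + 1 / 4 * (Q m p ^ 2 * p ^ 3)) (-t⁻¹ * r) := by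
    refine setIntegral_congr_fun measurableSet_Ioi fun r hr => ?_
    have hr : 0 < r := hr
    simp only
    have hc : ((((-t⁻¹) * aa m (-t⁻¹ * r) : ℝ) : ℂ) + Complex.I * r / (2 * t))
      = (((-t⁻¹) * aa m (-t⁻¹ * r) : ℝ) : ℂ) + ((r / (2 * t) : ℝ) : ℂ) * Complex.I := by
      push_cast; ring
    rw [(SS_r m t r ht hr).deriv, norm_mul, mul_pow, SS_norm, hc, ← Complex.normSq_eq_norm_sq,
      Complex.normSq_add_mul_I]
    generalize aa m (-t⁻¹ * r) = a
    generalize Q m (-t⁻¹ * r) = q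
    have := ht.ne
    field_simp
    ring
  rw [e, integral_const_mul, integral_comp_mul_left_Ioi (fun p => (t ^ 2)⁻¹ * ((aa m p * Q m p) ^ 2 * p)
        + 1 / 4 * (Q m p ^ 2 * p ^ 3)) _ hμ, mul_zero, integral_add,
    integral_const_mul, integral_const_mul, smul_eq_mul, mul_inv_cancel_left₀ hμ.ne']
  · exact (int_G m hm).const_mul _
  · exact (int_H m hm).const_mul _

/-- the pseudoconformal blowup solution `S(t,r) = (1/|t|) Q(r/|t|) e^{i r²/(4t)}`
solves CSS for `t < 0`, has the soliton mass, and blows up in `Ḣ¹` as `t ↗ 0`. -/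
theorem stmt5 (m : ℕ) (hm : 1 ≤ m) (S : ℝ → ℝ → ℂ)
    (hS : ∀ t < (0:ℝ), ∀ r : ℝ,
      S t r = ((1 / |t| : ℝ) : ℂ) * (Q m (r / |t|) : ℂ) *
        Complex.exp (Complex.I * (r : ℂ) ^ 2 / (4 * (t : ℂ)))) :
    (∀ t < (0:ℝ), ∀ r : ℝ, 0 < r → CSSeq m S t r) ∧
    (∀ t < (0:ℝ), L2sq (S t) = 8 * Real.pi * (m + 1)) ∧
    Tendsto (fun t => Real.sqrt (2 * Real.pi * ∫ r in Set.Ioi (0:ℝ), ‖deriv (S t) r‖ ^ 2 * r))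
      (nhdsWithin 0 (Set.Iio 0)) atTop := by
  have hSS : ∀ t < (0:ℝ), S t = SS m t := by
    intro t ht
    ext r
    rw [hS t ht, SS, abs_of_neg ht]
    have e1 : 1 / -t = -t⁻¹ := by rw [one_div, inv_neg]
    have e2 : r / -t = -t⁻¹ * r := by rw [← e1]; ring
    rw [e1, e2]
  refine ⟨fun t ht r hr => ?_, fun t ht => ?_, ?_⟩
  · have h := SS_css m hm t r ht hr
    have hd : deriv (fun s => S s r) t = deriv (fun s => SS m s r) t := by
      refine Filter.EventuallyEq.deriv_eq ?_
      filter_upwards [gt_mem_nhds ht] with s hs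
      rw [hSS s hs]
    unfold CSSeq at h ⊢
    rw [hd, hSS t ht]
    exact h
  · have hμ : 0 < -t⁻¹ := by simpa using ht
    rw [hSS t ht]
    exact L2_eq m _ hμ _ (SS_norm m t)
  · refine Real.tendsto_sqrt_atTop.comp ?_
    refine Tendsto.const_mul_atTop (by positivity) ?_
    have hG := G_pos m hm
    have h0 : Tendsto (fun t : ℝ => (t ^ 2)⁻¹) (nhdsWithin 0 (Set.Iio 0)) atTop := by
      refine Tendsto.comp tendsto_inv_nhdsGT_zero ?_
      refine tendsto_nhdsWithin_iff.2 ⟨?_, ?_⟩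
      · have : Tendsto (fun t : ℝ => t ^ 2) (nhds 0) (nhds (0 ^ 2)) := (continuous_pow 2).tendsto 0
        rw [zero_pow two_ne_zero] at this
        exact this.mono_left nhdsWithin_le_nhds
      · filter_upwards [self_mem_nhdsWithin] with t ht
        have : t ≠ 0 := ne_of_lt ht
        exact (by positivity : 0 < t ^ 2)
    refine (tendsto_atTop_add_const_right _
      (1 / 4 * ∫ p in Ioi (0:ℝ), Q m p ^ 2 * p ^ 3) (h0.atTop_mul_const hG)).congr' ?_
    filter_upwards [self_mem_nhdsWithin] with t ht
    rw [hSS t ht, SS_H1 m hm t ht]
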